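/- Let P ∈ ℝ[x] be a polynomial whose coefficient of x is non-Liouville. Then there exist constants τ > 0, ρ > 0 and X₀ > 0 such that for every positive integer d, every positive integer m, and every real X ≥ X₀ with m < X^ρ, one has |∑_{x=1}^{⌊X⌋} e(m·P(d·x)/d)| ≤ X^{1−τ}. -/

import Mathlib

open Real Finset

/-- `α` is Liouville: for every `n ∈ ℕ` there are integers `p, q` with `q > 1`
and `|α - p/q| ≤ q^(-n)`. -/
def IsLiouvilleNumber (α : ℝ) : Prop :=
  ∀ n : ℕ, ∃ p q : ℤ, 1 < q ∧ |α - (p : ℝ) / (q : ℝ)| ≤ (q : ℝ) ^ (-(n : ℤ))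

open Classical in
/-- The finset of primes `p < z`. -/
noncomputable def primesLt (z : ℝ) : Finset ℕ :=
  (Finset.range ⌈z⌉₊).filter fun p => p.Prime ∧ (p : ℝ) < z

/-- `P_z`, the product of all primes `p < z`. -/
noncomputable def Pz (z : ℝ) : ℕ := ∏ p ∈ primesLt z, p

open Classical in
/-- `S(X)`: the number of naturals `1 ≤ x ≤ X` with `gcd(x, ⌊P(x)⌋) = 1`. -/
noncomputable def S (P : Polynomial ℝ) (X : ℝ) : ℕ :=
  ((Finset.Icc 1 ⌊X⌋₊).filter fun x => Int.gcd (x : ℤ) ⌊P.eval (x : ℝ)⌋ = 1).card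

open Classical in
/-- `A_d(X)`: the set of naturals `1 ≤ x ≤ X` with `d ∣ x` and `d ∣ ⌊P(x)⌋`. -/
noncomputable def AP (P : Polynomial ℝ) (d : ℕ) (X : ℝ) : Finset ℕ :=
  (Finset.Icc 1 ⌊X⌋₊).filter fun x => (d : ℤ) ∣ (x : ℤ) ∧ (d : ℤ) ∣ ⌊P.eval (x : ℝ)⌋

open Classical in
/-- `S(X, z)`: the number of naturals `1 ≤ x ≤ X` with `gcd(gcd(x, ⌊P(x)⌋), P_z) = 1`. -/
noncomputable def S2 (P : Polynomial ℝ) (X z : ℝ) : ℕ :=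
  ((Finset.Icc 1 ⌊X⌋₊).filter fun x =>
    Nat.gcd (Int.gcd (x : ℤ) ⌊P.eval (x : ℝ)⌋) (Pz z) = 1).card

/-- `z = X ^ (c / log log X)` with `c = 1/(2(A+1))`. -/
noncomputable def zf (A X : ℝ) : ℝ := X ^ ((1 / (2 * (A + 1))) / Real.log (Real.log X))

/-!
Suppose an exponential sum with polynomial phase `f` of degree at most `k` has size at least `N / K`
on an interval of length at most `N`. Weyl differencing and induction on the degree give many `h`
for which a bounded multiple of `h * f.coeff k` is close to an integer; a recurrence argument then
makes `q * f.coeff k` extremely close to an integer for some bounded `q`. On progressions of step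
`q` and length `N` over a power of `K`, the top term is nearly constant, so some progression carries
a large sum with a phase of lower degree, and one descends to the linear coefficient. Thus
`q * f.coeff 1` lies within `K ^ C / N` of an integer for some `q ≤ K ^ C`. For the phase
`m * P (d * x) / d` the linear coefficient is `m * P.coeff 1`, whatever `d` is, and when `K` and `m`
are small powers of `N` this contradicts that `P.coeff 1` is not Liouville.
-/

open AddCircle (toCircle)
open scoped Polynomial

section Character

lemma norm_le_half (t : UnitAddCircle) : ‖t‖ ≤ 1 / 2 := by
  simpa using AddCircle.norm_le_half_period (1 : ℝ) (x := t) one_ne_zero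

lemma exists_coe_eq_and_abs_eq_norm (t : UnitAddCircle) :
    ∃ r : ℝ, (r : UnitAddCircle) = t ∧ |r| = ‖t‖ := by
  obtain ⟨r, rfl⟩ := QuotientAddGroup.mk_surjective t
  refine ⟨r - round r, ?_, UnitAddCircle.norm_eq.symm⟩
  rw [AddCircle.coe_sub]
  exact sub_eq_self.2 (AddCircle.coe_eq_zero_iff 1 |>.2 ⟨round r, by simp⟩)

lemma norm_toCircle_coe_sub_one (r : ℝ) :
    ‖(toCircle (r : UnitAddCircle) : ℂ) - 1‖ = 2 * |sin (π * r)| := by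
  rw [AddCircle.toCircle_apply_mk, Circle.coe_exp, mul_comm _ Complex.I,
    Complex.norm_exp_I_mul_ofReal_sub_one, norm_mul, Real.norm_two, Real.norm_eq_abs]
  ring_nf

lemma norm_toCircle_sub_one_le (t : UnitAddCircle) : ‖(toCircle t : ℂ) - 1‖ ≤ 2 * π * ‖t‖ := by
  obtain ⟨r, rfl, hr⟩ := exists_coe_eq_and_abs_eq_norm t
  calc ‖(toCircle (r : UnitAddCircle) : ℂ) - 1‖ = 2 * |sin (π * r)| := norm_toCircle_coe_sub_one r
    _ ≤ 2 * |π * r| := mul_le_mul_of_nonneg_left abs_sin_le_abs zero_le_two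
    _ = 2 * π * ‖(r : UnitAddCircle)‖ := by rw [abs_mul, abs_of_pos pi_pos, hr, mul_assoc]

lemma four_mul_norm_le_norm_toCircle_sub_one (t : UnitAddCircle) :
    4 * ‖t‖ ≤ ‖(toCircle t : ℂ) - 1‖ := by
  obtain ⟨r, rfl, hr⟩ := exists_coe_eq_and_abs_eq_norm t
  have hr_half : |r| ≤ 1 / 2 := hr ▸ norm_le_half _
  have habs : |π * r| = π * |r| := by rw [abs_mul, abs_of_pos pi_pos]
  have hsin := mul_abs_le_abs_sin (x := π * r) (by rw [habs]; nlinarith [pi_pos])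
  rw [habs, ← mul_assoc, div_mul_cancel₀ _ pi_ne_zero] at hsin
  rw [norm_toCircle_coe_sub_one, ← hr]
  linarith

lemma norm_toCircle_sub_toCircle_le (s t : UnitAddCircle) :
    ‖(toCircle s : ℂ) - toCircle t‖ ≤ 2 * π * ‖s - t‖ := by
  have hfactor : (toCircle s : ℂ) - toCircle t = toCircle t * (toCircle (s - t) - 1) := by
    rw [mul_sub, mul_one, ← Circle.coe_mul, ← AddCircle.toCircle_add, add_sub_cancel]
  rw [hfactor, norm_mul, Circle.norm_coe, one_mul]
  exact norm_toCircle_sub_one_le _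

lemma inner_toCircle (s t : UnitAddCircle) :
    inner ℂ (toCircle s : ℂ) (toCircle t : ℂ) = toCircle (t - s) := by
  rw [RCLike.inner_apply', sub_eq_neg_add, AddCircle.toCircle_add, AddCircle.toCircle_neg,
    Circle.coe_mul, Circle.coe_inv_eq_conj]

end Character

section ExpSum

/-- The exponential sum `∑_{x < M} e(g x)` attached to a phase `g`. Phases take values in `ℝ/ℤ`, so
that `‖g x‖` is the distance to the nearest integer. -/
noncomputable def expSum (g : ℕ → UnitAddCircle) (M : ℕ) : ℂ := ∑ x ∈ range M, (toCircle (g x) : ℂ)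

lemma norm_expSum_le (g : ℕ → UnitAddCircle) (M : ℕ) : ‖expSum g M‖ ≤ M := by
  simpa [expSum] using norm_sum_le_of_le (range M) fun x _ => (Circle.norm_coe (toCircle (g x))).le

lemma norm_expSum_sub_expSum_le {g g' : ℕ → UnitAddCircle} {M : ℕ} {δ : ℝ}
    (h : ∀ x < M, ‖g x - g' x‖ ≤ δ) : ‖expSum g M - expSum g' M‖ ≤ 2 * π * δ * M := by
  rw [expSum, expSum, ← sum_sub_distrib]
  have hterm : ∀ x ∈ range M, ‖(toCircle (g x) : ℂ) - toCircle (g' x)‖ ≤ 2 * π * δ := fun x hx =>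
    (norm_toCircle_sub_toCircle_le _ _).trans <| by gcongr; exact h x (mem_range.1 hx)
  simpa [mul_comm] using norm_sum_le_of_le (range M) hterm

lemma norm_expSum_linear_mul_norm_le_one (α c : UnitAddCircle) (M : ℕ) :
    ‖expSum (fun x => x • α + c) M‖ * ‖α‖ ≤ 1 := by
  have hgeom : expSum (fun x => x • α + c) M =
      (∑ x ∈ range M, (toCircle α : ℂ) ^ x) * toCircle c := by
    simp only [expSum, AddCircle.toCircle_add, AddCircle.toCircle_nsmul, Circle.coe_mul,
      Circle.coe_pow, sum_mul]
  have hbound : ‖∑ x ∈ range M, (toCircle α : ℂ) ^ x‖ * ‖(toCircle α : ℂ) - 1‖ ≤ 2 := by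
    rw [← norm_mul, geom_sum_mul]
    refine (norm_sub_le _ _).trans ?_
    rw [norm_pow, Circle.norm_coe, one_pow, norm_one, one_add_one_eq_two]
  rw [hgeom, norm_mul, Circle.norm_coe, mul_one]
  nlinarith [four_mul_norm_le_norm_toCircle_sub_one α, norm_nonneg α,
    norm_nonneg (∑ x ∈ range M, (toCircle α : ℂ) ^ x)]

end ExpSum

section VanDerCorput

lemma norm_sum_range_sq_add_sum_norm_sq {𝕜 E : Type*} [RCLike 𝕜] [SeminormedAddCommGroup E]
    [InnerProductSpace 𝕜 E] (v : ℕ → E) (M : ℕ) :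
    ‖∑ x ∈ range M, v x‖ ^ 2 + ∑ x ∈ range M, ‖v x‖ ^ 2 =
      2 * RCLike.re (∑ h ∈ range M, ∑ x ∈ range (M - h), inner 𝕜 (v x) (v (x + h))) := by
  rw [← sum_range_diag_flip M fun h x => inner 𝕜 (v x) (v (x + h))]
  induction M with
  | zero => simp
  | succ M ih =>
    have hdiag : ∑ h ∈ range (M + 1), inner 𝕜 (v (M - h)) (v (M - h + h)) =
        inner 𝕜 (∑ x ∈ range M, v x) (v M) + (‖v M‖ : 𝕜) ^ 2 := by
      rw [sum_inner, ← inner_self_eq_norm_sq_to_K, ← sum_range_succ fun x => inner 𝕜 (v x) (v M),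
        ← sum_range_reflect]
      refine sum_congr rfl fun h hh => ?_
      have hh := mem_range.1 hh
      rw [Nat.sub_add_cancel (by omega), show M - (M + 1 - 1 - h) = h by omega]
    rw [sum_range_succ v, sum_range_succ fun x => ‖v x‖ ^ 2, sum_range_succ, hdiag, map_add,
      map_add, mul_add, ← ih, norm_add_sq (𝕜 := 𝕜), ← RCLike.ofReal_pow, RCLike.ofReal_re]
    ring

lemma norm_expSum_sq_le (g : ℕ → UnitAddCircle) (M : ℕ) :
    ‖expSum g M‖ ^ 2 ≤ 2 * ∑ h ∈ range M, ‖expSum (fun x => g (x + h) - g x) (M - h)‖ := by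
  have hid := norm_sum_range_sq_add_sum_norm_sq (𝕜 := ℂ) (fun x => (toCircle (g x) : ℂ)) M
  simp only [inner_toCircle] at hid
  calc ‖expSum g M‖ ^ 2
      ≤ 2 * (∑ h ∈ range M, expSum (fun x => g (x + h) - g x) (M - h)).re := by
        refine le_of_add_le_of_nonneg_left hid.le (by positivity)
    _ ≤ 2 * ‖∑ h ∈ range M, expSum (fun x => g (x + h) - g x) (M - h)‖ := by
        gcongr
        exact Complex.re_le_norm _
    _ ≤ _ := by
        gcongr
        exact norm_sum_le _ _

lemma le_mul_card_filter_of_le_mul_norm_expSum {g : ℕ → UnitAddCircle} {M N : ℕ} {K : ℝ}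
    (hK : 0 < K) (hMN : M ≤ N) (hN : 0 < N) (hlarge : N ≤ K * ‖expSum g M‖) :
    (N : ℝ) ≤ 4 * K ^ 2 *
      #{h ∈ range M | (N : ℝ) ≤ 4 * K ^ 2 * ‖expSum (fun x => g (x + h) - g x) (M - h)‖} := by
  set S : ℕ → ℝ := fun h => ‖expSum (fun x => g (x + h) - g x) (M - h)‖
  set H := {h ∈ range M | (N : ℝ) ≤ 4 * K ^ 2 * S h}
  have hN' : (0 : ℝ) < N := Nat.cast_pos.2 hN
  have hS_le (h : ℕ) : S h ≤ (if N ≤ 4 * K ^ 2 * S h then (N : ℝ) else 0) + N / (4 * K ^ 2) := by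
    split_ifs with hh
    · have hSN : S h ≤ N :=
        (norm_expSum_le _ _).trans (by exact_mod_cast (Nat.sub_le M h).trans hMN)
      exact le_add_of_le_of_nonneg hSN (by positivity)
    · rw [zero_add, le_div_iff₀' (by positivity)]
      exact (not_le.1 hh).le
  have hsum : ∑ h ∈ range M, S h ≤ #H * N + N * (N / (4 * K ^ 2)) := by
    refine (sum_le_sum fun h _ => hS_le h).trans ?_
    rw [sum_add_distrib, ← sum_filter, sum_const, sum_const, card_range, nsmul_eq_mul, nsmul_eq_mul]
    gcongr
  have hsq : (N : ℝ) ^ 2 ≤ N * ((4 * K ^ 2 * #H + N) / 2) :=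
    calc (N : ℝ) ^ 2 ≤ (K * ‖expSum g M‖) ^ 2 := by gcongr
      _ = K ^ 2 * ‖expSum g M‖ ^ 2 := mul_pow _ _ _
      _ ≤ K ^ 2 * (2 * (#H * N + N * (N / (4 * K ^ 2)))) := by
        gcongr
        exact (norm_expSum_sq_le g M).trans (by gcongr)
      _ = N * ((4 * K ^ 2 * #H + N) / 2) := by field_simp; ring
  rw [sq] at hsq
  linarith [le_of_mul_le_mul_left hsq hN']

end VanDerCorput

section Progression

lemma sum_range_filter_mod_div_eq {E : Type*} [AddCommMonoid E] (F : ℕ → E) (M : ℕ) {q L r : ℕ}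
    (hq : 0 < q) (hL : 0 < L) (hr : r < q) (b : ℕ) :
    ∃ n ≤ L, (∀ y < n, r + q * (b * L) + q * y < M) ∧
      ∑ x ∈ range M with (x % q, x / q / L) = (r, b), F x =
        ∑ y ∈ range n, F (r + q * (b * L) + q * y) := by
  set x₀ := r + q * (b * L)
  set n := min L ((M - x₀ + (q - 1)) / q)
  have hlt (y : ℕ) : y < (M - x₀ + (q - 1)) / q ↔ x₀ + q * y < M := by
    rw [Nat.lt_iff_add_one_le, Nat.le_div_iff_mul_le hq, add_mul, one_mul, mul_comm y q]
    omega
  have hdiv {x : ℕ} (hx : (x % q, x / q / L) = (r, b)) : x₀ + q * (x / q % L) = x := by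
    obtain ⟨rfl, rfl⟩ := Prod.mk.inj hx
    calc x % q + q * (x / q / L * L) + q * (x / q % L)
        = q * (L * (x / q / L) + x / q % L) + x % q := by ring
      _ = x := by rw [Nat.div_add_mod, Nat.div_add_mod]
  have hquot (y : ℕ) : (x₀ + q * y) / q = L * b + y := by
    rw [show x₀ + q * y = r + q * (L * b + y) by simp only [x₀]; ring,
      Nat.add_mul_div_left _ _ hq, Nat.div_eq_of_lt hr, zero_add]
  have hrem (y : ℕ) : (x₀ + q * y) % q = r := by
    rw [Nat.add_mul_mod_self_left, Nat.add_mul_mod_self_left, Nat.mod_eq_of_lt hr]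
  refine ⟨n, min_le_left _ _, fun y hy => (hlt y).1 (hy.trans_le (min_le_right _ _)), ?_⟩
  refine sum_nbij' (fun x => x / q % L) (fun y => x₀ + q * y) (fun x hx => ?_) (fun y hy => ?_)
    (fun x hx => hdiv (mem_filter.1 hx).2) (fun y hy => ?_)
    fun x hx => by rw [hdiv (mem_filter.1 hx).2]
  · obtain ⟨hxM, hx⟩ := mem_filter.1 hx
    rw [mem_range, lt_min_iff, hlt, hdiv hx]
    exact ⟨Nat.mod_lt _ hL, mem_range.1 hxM⟩
  · obtain ⟨hyL, hyM⟩ := lt_min_iff.1 (mem_range.1 hy)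
    rw [mem_filter, mem_range, ← hlt, hquot, hrem, Nat.mul_add_div hL, Nat.div_eq_of_lt hyL]
    exact ⟨hyM, rfl⟩
  · rw [hquot, Nat.mul_add_mod_self_left,
      Nat.mod_eq_of_lt ((mem_range.1 hy).trans_le (min_le_left _ _))]

lemma exists_progression_norm_sum_le {E : Type*} [SeminormedAddCommGroup E] (F : ℕ → E) (M : ℕ)
    {q L : ℕ} (hq : 0 < q) (hL : 0 < L) :
    ∃ x₀ n : ℕ, n ≤ L ∧ (∀ y < n, x₀ + q * y < M) ∧
      ‖∑ x ∈ range M, F x‖ ≤ (M / L + q) * ‖∑ y ∈ range n, F (x₀ + q * y)‖ := by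
  set cells := range q ×ˢ range (M / (q * L) + 1)
  have hmaps : ∀ x ∈ range M, (x % q, x / q / L) ∈ cells := fun x hx => by
    simp only [cells, mem_product, mem_range, Nat.div_div_eq_div_mul]
    exact ⟨Nat.mod_lt _ hq, Nat.lt_succ_of_le (Nat.div_le_div_right (mem_range.1 hx).le)⟩
  have hcells : (#cells : ℝ) ≤ M / L + q := by
    have hfloor : ((M / (q * L) : ℕ) : ℝ) ≤ M / (q * L) := by exact_mod_cast Nat.cast_div_le
    calc (#cells : ℝ) = q * ((M / (q * L) : ℕ) + 1) := by simp [cells]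
      _ ≤ q * (M / (q * L) + 1) := by gcongr
      _ = M / L + q := by field_simp
  obtain ⟨⟨r, b⟩, hrb, hmax⟩ := cells.exists_max_image
    (fun p => ‖∑ x ∈ range M with (x % q, x / q / L) = p, F x‖) ⟨(0, 0), by simp [cells, hq]⟩
  obtain ⟨n, hn, hlt, hsum⟩ :=
    sum_range_filter_mod_div_eq F M hq hL (mem_range.1 (mem_product.1 hrb).1) b
  refine ⟨r + q * (b * L), n, hn, hlt, ?_⟩
  calc ‖∑ x ∈ range M, F x‖ ≤ ∑ p ∈ cells, ‖∑ x ∈ range M with (x % q, x / q / L) = p, F x‖ := by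
        rw [← sum_fiberwise_of_maps_to hmaps F]
        exact norm_sum_le _ _
    _ ≤ #cells * ‖∑ y ∈ range n, F (r + q * (b * L) + q * y)‖ := by
        rw [← hsum, ← nsmul_eq_mul]
        exact sum_le_card_nsmul _ _ _ hmax
    _ ≤ _ := by gcongr

lemma exists_progression_le_mul_norm_sum {E : Type*} [SeminormedAddCommGroup E] {F : ℕ → E}
    {M N q L : ℕ} {K : ℝ} (hK : 0 ≤ K) (hMN : M ≤ N) (hN : 0 < N) (hq : 0 < q) (hL : 0 < L)
    (hqL : q * L ≤ N) (hlarge : N ≤ K * ‖∑ x ∈ range M, F x‖) :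
    ∃ x₀ n : ℕ, n ≤ L ∧ (∀ y < n, x₀ + q * y < M) ∧
      (L : ℝ) ≤ 2 * K * ‖∑ y ∈ range n, F (x₀ + q * y)‖ := by
  obtain ⟨x₀, n, hn, hlt, hsum⟩ := exists_progression_norm_sum_le F M hq hL
  have hN' : (0 : ℝ) < N := Nat.cast_pos.2 hN
  have hL' : (0 : ℝ) < L := Nat.cast_pos.2 hL
  have hq_le : (q : ℝ) ≤ N / L := (le_div_iff₀ hL').2 (by exact_mod_cast hqL)
  set s := ‖∑ y ∈ range n, F (x₀ + q * y)‖
  refine ⟨x₀, n, hn, hlt, le_of_mul_le_mul_left ?_ hN'⟩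
  calc (N : ℝ) * L ≤ K * ((N / L + N / L) * s) * L := by
        gcongr
        refine hlarge.trans ?_
        gcongr
        exact hsum.trans (by gcongr)
    _ = N * (2 * K * s) := by field_simp; ring

end Progression

section Recurrence

lemma exists_natCast_mul_le_and_le {a x : ℝ} (ha : 0 < a) (hax : a ≤ x) :
    ∃ L : ℕ, 0 < L ∧ a * L ≤ x ∧ x ≤ 2 * a * L := by
  have hle := (le_div_iff₀' ha).1 (Nat.floor_le (div_nonneg (ha.le.trans hax) ha.le))
  have hlt := (div_lt_iff₀' ha).1 (Nat.lt_floor_add_one (x / a))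
  have hpos : 0 < ⌊x / a⌋₊ := Nat.floor_pos.2 ((one_le_div ha).2 hax)
  have hone : (1 : ℝ) ≤ ⌊x / a⌋₊ := by exact_mod_cast hpos
  exact ⟨_, hpos, hle, by nlinarith⟩

variable {H : Finset ℕ} {N : ℕ} {K ε : ℝ}

lemma exists_lt_sub_le_of_le_mul_card (hK : 0 < K) (hN : 2 * K < N) (hH : ∀ h ∈ H, h < N)
    (hcard : N ≤ K * #H) : ∃ x ∈ H, ∃ y ∈ H, x < y ∧ ((y - x : ℕ) : ℝ) ≤ 2 * K := by
  have hpigeon : #(range (⌊N / (2 * K)⌋₊ + 1)) < #H := by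
    have hfloor : (⌊N / (2 * K)⌋₊ : ℝ) ≤ N / (2 * K) := Nat.floor_le (by positivity)
    have hone : 1 < N / (2 * K) := (one_lt_div (by positivity)).2 hN
    have hcard' : N / (2 * K) + N / (2 * K) ≤ #H := by
      rw [← add_div, div_le_iff₀ (by positivity)]
      linarith
    rw [card_range, ← Nat.cast_lt (α := ℝ), Nat.cast_add_one]
    linarith
  obtain ⟨x, hx, y, hy, hne, hxy⟩ := exists_ne_map_eq_of_card_lt_of_maps_to hpigeon
    (f := fun h : ℕ => ⌊h / (2 * K)⌋₊) fun h hh => by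
      rw [mem_coe, mem_range, Nat.lt_succ_iff]
      exact Nat.floor_mono (by gcongr; exact (hH h hh).le)
  wlog hlt : x < y generalizing x y
  · exact this y hy x hx hne.symm hxy.symm (by omega)
  refine ⟨x, hx, y, hy, hlt, ?_⟩
  have hx_ge : (⌊x / (2 * K)⌋₊ : ℝ) ≤ x / (2 * K) := Nat.floor_le (by positivity)
  have hy_lt := Nat.lt_floor_add_one (y / (2 * K))
  rw [Nat.cast_sub hlt.le, ← div_le_one (by positivity), sub_div]
  rw [hxy] at hx_ge
  linarith

lemma exists_norm_nsmul_le_of_le_mul_card {A : Type*} [SeminormedAddCommGroup A] {β : A}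
    (hK : 0 < K) (hN : 2 * K < N) (hH : ∀ h ∈ H, h < N) (hcard : N ≤ K * #H)
    (hgood : ∀ h ∈ H, ‖h • β‖ ≤ ε) : ∃ q : ℕ, 0 < q ∧ q ≤ 2 * K ∧ ‖q • β‖ ≤ 2 * ε := by
  obtain ⟨x, hx, y, hy, hlt, hyx⟩ := exists_lt_sub_le_of_le_mul_card hK hN hH hcard
  refine ⟨y - x, Nat.sub_pos_of_lt hlt, hyx, ?_⟩
  rw [sub_nsmul _ hlt.le, ← sub_eq_add_neg]
  linarith [norm_sub_le (y • β) (x • β), hgood x hx, hgood y hy]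

lemma norm_nsmul_eq_of_mul_norm_le {θ : UnitAddCircle} {n : ℕ} (h : n * ‖θ‖ ≤ 1 / 2) :
    ‖n • θ‖ = n * ‖θ‖ := by
  obtain ⟨r, rfl, hr⟩ := exists_coe_eq_and_abs_eq_norm θ
  have habs : |n • r| = n * |r| := by rw [nsmul_eq_mul, abs_mul, Nat.abs_cast]
  rw [← hr] at h ⊢
  rw [← AddCircle.coe_nsmul, ← habs, AddCircle.norm_coe_eq_abs_iff 1 one_ne_zero, habs, abs_one]
  exact h

lemma card_mul_norm_le {θ : UnitAddCircle} {T : Finset ℕ} {L : ℕ} {δ : ℝ}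
    (hL : L * ‖θ‖ ≤ 1 / 2) (hT : ∀ y ∈ T, y < L)
    (hclose : ∀ y ∈ T, ∀ y' ∈ T, ‖y' • θ - y • θ‖ ≤ δ) (hδ : 0 ≤ δ) :
    #T * ‖θ‖ ≤ δ + ‖θ‖ := by
  rcases T.eq_empty_or_nonempty with rfl | hne
  · simpa using add_nonneg hδ (norm_nonneg θ)
  set y := T.min' hne
  set y' := T.max' hne
  have hyy' : y ≤ y' := T.min'_le _ (T.max'_mem hne)
  have hcard : #T ≤ y' - y + 1 := by
    have hsub : T ⊆ Icc y y' := fun x hx => mem_Icc.2 ⟨T.min'_le x hx, T.le_max' x hx⟩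
    have := card_le_card hsub
    rw [Nat.card_Icc] at this
    omega
  have hdiam : ((y' - y : ℕ) : ℝ) * ‖θ‖ ≤ δ := by
    have hsmall : ((y' - y : ℕ) : ℝ) ≤ L := by
      exact_mod_cast (Nat.sub_le _ _).trans (hT _ (T.max'_mem hne)).le
    rw [← norm_nsmul_eq_of_mul_norm_le ((by gcongr : _ ≤ L * ‖θ‖).trans hL), sub_nsmul _ hyy',
      ← sub_eq_add_neg]
    exact hclose _ (T.min'_mem hne) _ (T.max'_mem hne)
  calc #T * ‖θ‖ ≤ ((y' - y + 1 : ℕ) : ℝ) * ‖θ‖ := by gcongr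
    _ = (y' - y : ℕ) * ‖θ‖ + ‖θ‖ := by push_cast; ring
    _ ≤ δ + ‖θ‖ := by gcongr

lemma exists_card_le_mul_card_filter (hH : ∀ h ∈ H, h < N) {q L : ℕ} (hq : 0 < q) (hL : 0 < L) :
    ∃ x₀ : ℕ, (#H : ℝ) ≤ (N / L + q) * #{y ∈ range L | x₀ + q * y ∈ H} := by
  obtain ⟨x₀, n, hn, -, hsum⟩ :=
    exists_progression_norm_sum_le (fun x => if x ∈ H then (1 : ℝ) else 0) N hq hL
  have hHN : {x ∈ range N | x ∈ H} = H := by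
    ext x
    simpa using hH x
  simp only [sum_boole, Real.norm_natCast, hHN] at hsum
  refine ⟨x₀, hsum.trans ?_⟩
  gcongr

lemma exists_norm_nsmul_mul_le_of_le_mul_card {β : UnitAddCircle} (hK : 0 < K) (hN : 2 * K < N)
    (hH : ∀ h ∈ H, h < N) (hcard : N ≤ K * #H) (hgood : ∀ h ∈ H, ‖h • β‖ ≤ ε)
    (hε : 32 * K * ε ≤ 1) :
    ∃ q : ℕ, 0 < q ∧ q ≤ 2 * K ∧ ‖q • β‖ * N ≤ 16 * K ^ 2 * ε := by
  obtain ⟨q, hq, hqK, hqβ⟩ := exists_norm_nsmul_le_of_le_mul_card hK hN hH hcard hgood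
  refine ⟨q, hq, hqK, ?_⟩
  set θ := q • β
  have hε₀ : 0 ≤ ε := by linarith [norm_nonneg θ]
  rcases (norm_nonneg θ).eq_or_lt with hθ | hθ
  · rw [← hθ, zero_mul]
    positivity
  obtain ⟨L, hL, hLθ, hLθ'⟩ := exists_natCast_mul_le_and_le hθ (norm_le_half θ)
  rw [mul_comm] at hLθ
  obtain ⟨x₀, hT⟩ := exists_card_le_mul_card_filter hH hq hL
  set T := {y ∈ range L | x₀ + q * y ∈ H}
  have hTθ : #T * ‖θ‖ ≤ 2 * ε + ‖θ‖ := by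
    refine card_mul_norm_le hLθ (fun y hy => mem_range.1 (mem_filter.1 hy).1)
      (fun y hy y' hy' => ?_) (by positivity)
    have hdiff : y' • θ - y • θ = (x₀ + q * y') • β - (x₀ + q * y) • β := by
      simp only [θ, add_nsmul, mul_comm q, mul_nsmul']
      abel
    rw [hdiff]
    linarith [norm_sub_le ((x₀ + q * y') • β) ((x₀ + q * y) • β),
      hgood _ (mem_filter.1 hy).2, hgood _ (mem_filter.1 hy').2]
  have hmain : N * ‖θ‖ ≤ K * (4 * ‖θ‖ * N + q) * (4 * ε) :=
    calc N * ‖θ‖ ≤ K * ((N / L + q) * #T) * ‖θ‖ := by gcongr; exact hcard.trans (by gcongr)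
      _ = K * (N / L + q) * (#T * ‖θ‖) := by ring
      _ ≤ K * (4 * ‖θ‖ * N + q) * (4 * ε) := by
        have hNL : N / L ≤ 4 * ‖θ‖ * N := (div_le_iff₀ (by positivity)).2 (by nlinarith)
        have hTε : #T * ‖θ‖ ≤ 4 * ε := by linarith
        gcongr
  have habsorb : 32 * K * ε * (‖θ‖ * N) ≤ 1 * (‖θ‖ * N) := by gcongr
  have hq_bound : K * ε * q ≤ K * ε * (2 * K) := by gcongr
  nlinarith

lemma exists_norm_nsmul_mul_le_of_exists_nsmul {β : UnitAddCircle} {B : ℝ} (hK : 0 < K)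
    (hB : 1 ≤ B) (hN : 2 * (K * B) < N) (hH : ∀ h ∈ H, h < N) (hcard : N ≤ K * #H)
    (hgood : ∀ h ∈ H, ∃ q : ℕ, 0 < q ∧ q ≤ B ∧ ‖q • h • β‖ ≤ ε) (hε : 32 * (K * B) * ε ≤ 1) :
    ∃ q : ℕ, 0 < q ∧ q ≤ 2 * K * B ^ 2 ∧ ‖q • β‖ * N ≤ 16 * (K * B) ^ 2 * ε := by
  choose! d hd_pos hd_le hd using hgood
  have hB₀ : 0 < B := by linarith
  have hmaps : ∀ h ∈ H, d h ∈ Icc 1 ⌊B⌋₊ :=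
    fun h hh => mem_Icc.2 ⟨hd_pos h hh, Nat.le_floor (hd_le h hh)⟩
  have hcount : #(Icc 1 ⌊B⌋₊) • (#H / B : ℝ) ≤ #H := by
    rw [Nat.card_Icc, Nat.add_sub_cancel, nsmul_eq_mul, mul_div_left_comm]
    exact mul_le_of_le_one_right (by positivity) ((div_le_one hB₀).2 (Nat.floor_le hB₀.le))
  obtain ⟨a, ha, hfiber⟩ := exists_le_card_fiber_of_nsmul_le_card_of_maps_to hmaps
    (nonempty_Icc.2 (Nat.floor_pos.2 hB)) hcount
  obtain ⟨ha_pos, ha_le⟩ := mem_Icc.1 ha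
  obtain ⟨q, hq, hqK, hqβ⟩ := exists_norm_nsmul_mul_le_of_le_mul_card (β := a • β) (ε := ε)
    (K := K * B) (H := {h ∈ H | d h = a}) (by positivity) hN
    (fun h hh => hH h (mem_filter.1 hh).1)
    (by rw [mul_assoc]; exact hcard.trans (by gcongr; exact (div_le_iff₀' hB₀).1 hfiber))
    (fun h hh => by
      obtain ⟨hhH, rfl⟩ := mem_filter.1 hh
      rw [nsmul_left_comm]
      exact hd h hhH) hε
  refine ⟨q * a, Nat.mul_pos hq ha_pos, ?_, by rwa [mul_nsmul']⟩
  calc ((q * a : ℕ) : ℝ) ≤ (2 * (K * B)) * B := by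
        rw [Nat.cast_mul]
        gcongr
        exact (Nat.le_floor_iff hB₀.le).1 ha_le
    _ = 2 * K * B ^ 2 := by ring

end Recurrence

section PolynomialShift

lemma natDegree_comp_C_mul_X_le {R : Type*} [CommSemiring R] (f : R[X]) (r : R) :
    (f.comp (Polynomial.C r * Polynomial.X)).natDegree ≤ f.natDegree := by
  rw [Polynomial.natDegree_le_iff_coeff_eq_zero]
  intro n hn
  rw [Polynomial.comp_C_mul_X_coeff, Polynomial.coeff_eq_zero_of_natDegree_lt hn, zero_mul]

variable {R : Type*} [CommRing R] {f : R[X]} {i : ℕ}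

lemma coeff_taylor_of_natDegree_le (hf : f.natDegree ≤ i) (r : R) :
    (f.taylor r).coeff i = f.coeff i := by
  rcases hf.eq_or_lt with rfl | hlt
  · exact Polynomial.coeff_taylor_natDegree r f
  · rw [Polynomial.coeff_eq_zero_of_natDegree_lt hlt,
      Polynomial.coeff_eq_zero_of_natDegree_lt (by rwa [Polynomial.natDegree_taylor])]

lemma natDegree_taylor_sub_le (hf : f.natDegree ≤ i + 1) (r : R) :
    (f.taylor r - f).natDegree ≤ i := by
  rw [Polynomial.natDegree_le_iff_coeff_eq_zero]
  intro n hn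
  rw [Polynomial.coeff_sub, coeff_taylor_of_natDegree_le (hf.trans hn), sub_self]

lemma coeff_taylor_sub (hf : f.natDegree ≤ i + 1) (r : R) :
    (f.taylor r - f).coeff i = (i + 1 : ℕ) * (r * f.coeff (i + 1)) := by
  have hdeg : (f.hasseDeriv i).natDegree < 2 := by
    have := Polynomial.natDegree_hasseDeriv_le f i
    omega
  rw [Polynomial.coeff_sub, Polynomial.taylor_coeff, Polynomial.eval_eq_sum_range' hdeg,
    sum_range_succ, sum_range_one, Polynomial.hasseDeriv_coeff, Polynomial.hasseDeriv_coeff,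
    zero_add, Nat.choose_self, add_comm 1 i, Nat.choose_succ_self_right]
  ring

end PolynomialShift

section PolyPhase

/-- The phase `x ↦ f x` modulo one of a real polynomial `f`. -/
noncomputable def polyPhase (f : ℝ[X]) (x : ℕ) : UnitAddCircle := (f.eval (x : ℝ) : ℝ)

lemma polyPhase_add_sub (f : ℝ[X]) (x h : ℕ) :
    polyPhase f (x + h) - polyPhase f x = polyPhase (f.taylor (h : ℝ) - f) x := by
  simp only [polyPhase, ← AddCircle.coe_sub, Polynomial.eval_sub, Polynomial.taylor_eval,
    Nat.cast_add]

lemma polyPhase_of_natDegree_le_one {f : ℝ[X]} (hf : f.natDegree ≤ 1) :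
    polyPhase f = fun x => x • (f.coeff 1 : UnitAddCircle) + (f.coeff 0 : UnitAddCircle) := by
  funext x
  rw [polyPhase, Polynomial.eval_eq_sum_range' (Nat.lt_succ_of_le hf), sum_range_succ,
    sum_range_one, ← AddCircle.coe_nsmul, ← AddCircle.coe_add, nsmul_eq_mul]
  ring_nf

/-- The inverse form of Weyl's inequality for the coefficients of index in `(m, k]` of polynomials
of degree at most `k`: if an exponential sum of such a polynomial `f` over an interval of length at
most `N` has size at least `N / K`, then a single `q ≤ K ^ C` brings each `q * f.coeff j` within
`K ^ C / N ^ j` of an integer. -/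
def InverseWeyl (k m C : ℕ) : Prop :=
  ∀ ⦃f : ℝ[X]⦄ ⦃M N : ℕ⦄ ⦃K : ℝ⦄, f.natDegree ≤ k → 2 ≤ K → M ≤ N →
    N ≤ K * ‖expSum (polyPhase f) M‖ →
      ∃ q : ℕ, 0 < q ∧ q ≤ K ^ C ∧
        ∀ j ∈ Ioc m k, N ^ j * ‖q • (f.coeff j : UnitAddCircle)‖ ≤ K ^ C

end PolyPhase

section TopCoefficient

lemma natCast_le_pow {K : ℝ} (hK : 2 ≤ K) (n : ℕ) : (n : ℝ) ≤ K ^ n :=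
  calc (n : ℝ) ≤ 2 ^ n := by exact_mod_cast Nat.lt_two_pow_self.le
    _ ≤ K ^ n := by gcongr

lemma pow_mul_norm_le_pow {N K : ℝ} {E j C : ℕ} (hN : 0 ≤ N) (hK : 1 ≤ K) (hNE : N ≤ K ^ E)
    (hC : E * j ≤ C) (t : UnitAddCircle) : N ^ j * ‖t‖ ≤ K ^ C := by
  have ht : ‖t‖ ≤ 1 := by linarith [norm_le_half t]
  calc N ^ j * ‖t‖ ≤ (K ^ E) ^ j * 1 := by gcongr
    _ = K ^ (E * j) := by rw [mul_one, pow_mul]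
    _ ≤ K ^ C := pow_le_pow_right₀ hK hC

lemma inverseWeyl_one : InverseWeyl 1 0 1 := by
  intro f M N K hf hK _ hlarge
  refine ⟨1, one_pos, by simp; linarith, fun j hj => ?_⟩
  obtain rfl : j = 1 := by simpa [Nat.le_antisymm_iff, Nat.succ_le_iff, and_comm] using hj
  rw [polyPhase_of_natDegree_le_one hf] at hlarge
  have hgeom := norm_expSum_linear_mul_norm_le_one (f.coeff 1 : UnitAddCircle) (f.coeff 0) M
  rw [one_nsmul, pow_one, pow_one]
  nlinarith [norm_nonneg ((f.coeff 1 : ℝ) : UnitAddCircle)]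

variable {i C : ℕ}

lemma InverseWeyl.exists_nsmul_nsmul (hC : InverseWeyl (i + 1) i C) {f : ℝ[X]} {M N h : ℕ} {K : ℝ}
    (hf : f.natDegree ≤ i + 2) (hK : 2 ≤ K) (hMN : M ≤ N) (hN : 0 < N)
    (hlarge : N ≤ K * ‖expSum (fun x => polyPhase f (x + h) - polyPhase f x) (M - h)‖) :
    ∃ q : ℕ, 0 < q ∧ q ≤ K ^ C ∧
      ‖q • h • (i + 2) • (f.coeff (i + 2) : UnitAddCircle)‖ ≤ K ^ C / N ^ (i + 1) := by
  simp only [polyPhase_add_sub] at hlarge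
  obtain ⟨q, hq, hqK, happrox⟩ :=
    hC (natDegree_taylor_sub_le hf _) hK ((Nat.sub_le M h).trans hMN) hlarge
  refine ⟨q, hq, hqK, ?_⟩
  have htop := happrox (i + 1) (by simp)
  rw [coeff_taylor_sub hf, ← nsmul_eq_mul, ← nsmul_eq_mul, AddCircle.coe_nsmul,
    AddCircle.coe_nsmul, nsmul_left_comm _ h] at htop
  rwa [le_div_iff₀' (by positivity)]

lemma InverseWeyl.exists_nsmul_coeff_succ (hC : InverseWeyl (i + 1) i C) {f : ℝ[X]} {M N : ℕ}
    {K : ℝ} (hf : f.natDegree ≤ i + 2) (hK : 2 ≤ K) (hMN : M ≤ N)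
    (hlarge : N ≤ K * ‖expSum (polyPhase f) M‖) (hN : (4 * K ^ 2) ^ (2 * C + 3) < N) :
    ∃ q : ℕ, 0 < q ∧ q ≤ 2 * (4 * K ^ 2) ^ (2 * C + 1) ∧
      N ^ (i + 2) * ‖q • (i + 2) • (f.coeff (i + 2) : UnitAddCircle)‖ ≤
        16 * (4 * K ^ 2) ^ (3 * C + 2) := by
  have hN_pos : (0 : ℝ) < N := lt_of_le_of_lt (by positivity) hN
  have hcard := le_mul_card_filter_of_le_mul_norm_expSum (by positivity) hMN
    (Nat.cast_pos.1 hN_pos) hlarge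
  have hK₁ : 16 ≤ 4 * K ^ 2 := by nlinarith
  generalize 4 * K ^ 2 = K₁ at *
  have hgap : 32 * K₁ ^ (2 * C + 1) < N :=
    calc 32 * K₁ ^ (2 * C + 1) ≤ K₁ ^ 2 * K₁ ^ (2 * C + 1) := by gcongr; nlinarith
      _ = K₁ ^ (2 * C + 3) := by ring
      _ < N := hN
  have hgap' : 2 * (K₁ * K₁ ^ C) < N :=
    calc 2 * (K₁ * K₁ ^ C) = 2 * K₁ ^ (C + 1) := by ring
      _ ≤ 32 * K₁ ^ (2 * C + 1) := by gcongr <;> [norm_num; linarith; omega]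
      _ < N := hgap
  obtain ⟨q, hq, hqK, hqN⟩ := exists_norm_nsmul_mul_le_of_exists_nsmul
    (β := (i + 2) • (f.coeff (i + 2) : UnitAddCircle)) (ε := K₁ ^ C / N ^ (i + 1)) (by positivity)
    (one_le_pow₀ (n := C) (by linarith)) hgap'
    (fun h hh => (mem_range.1 (mem_filter.1 hh).1).trans_le hMN) hcard
    (fun h hh => hC.exists_nsmul_nsmul hf (by linarith) hMN (Nat.cast_pos.1 hN_pos)
      (mem_filter.1 hh).2)
    (by
      have hN_one : (1 : ℝ) ≤ N := by exact_mod_cast hN_pos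
      rw [mul_div_assoc', div_le_one (by positivity)]
      calc 32 * (K₁ * K₁ ^ C) * K₁ ^ C = 32 * K₁ ^ (2 * C + 1) := by ring
        _ ≤ N := hgap.le
        _ ≤ (N : ℝ) ^ (i + 1) := le_self_pow₀ hN_one i.succ_ne_zero)
  refine ⟨q, hq, hqK.trans_eq (by ring), ?_⟩
  rw [mul_div_assoc', le_div_iff₀ (by positivity)] at hqN
  calc _ = ‖q • (i + 2) • (f.coeff (i + 2) : UnitAddCircle)‖ * N * N ^ (i + 1) := by ring
    _ ≤ 16 * (K₁ * K₁ ^ C) ^ 2 * K₁ ^ C := hqN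
    _ = 16 * K₁ ^ (3 * C + 2) := by ring

lemma InverseWeyl.succ (hC : InverseWeyl (i + 1) i C) :
    InverseWeyl (i + 2) (i + 1) (4 * ((2 * C + 3) * (i + 2) + 3 * C + 3 + i)) := by
  intro f M N K hf hK hMN hlarge
  set D := (2 * C + 3) * (i + 2) + 3 * C + 3 + i
  set K₁ := 4 * K ^ 2
  have hK₁ : 16 ≤ K₁ := by nlinarith
  have hK₁_one : 1 ≤ K₁ := by linarith
  suffices ∃ q : ℕ, 0 < q ∧ q ≤ K₁ ^ D ∧
      N ^ (i + 2) * ‖q • (f.coeff (i + 2) : UnitAddCircle)‖ ≤ K₁ ^ D by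
    have hpow : K₁ ^ D ≤ K ^ (4 * D) := by
      rw [pow_mul]
      gcongr
      nlinarith [sq_nonneg (K ^ 2 - 4)]
    obtain ⟨q, hq, hqK, happrox⟩ := this
    refine ⟨q, hq, hqK.trans hpow, fun j hj => ?_⟩
    obtain rfl : j = i + 2 := by have := mem_Ioc.1 hj; omega
    exact happrox.trans hpow
  rcases le_or_gt (N : ℝ) (K₁ ^ (2 * C + 3)) with hsmall | hbig
  · refine ⟨1, one_pos, by simpa using one_le_pow₀ hK₁_one, ?_⟩
    exact pow_mul_norm_le_pow N.cast_nonneg hK₁_one hsmall (by omega) _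
  obtain ⟨q, hq, hqK, happrox⟩ := hC.exists_nsmul_coeff_succ hf hK hMN hlarge hbig
  have hi : ((i + 2 : ℕ) : ℝ) ≤ K₁ ^ (i + 2) := natCast_le_pow (by linarith) _
  refine ⟨q * (i + 2), by positivity, ?_, ?_⟩
  · calc ((q * (i + 2) : ℕ) : ℝ) ≤ K₁ * K₁ ^ (2 * C + 1) * K₁ ^ (i + 2) := by
          rw [Nat.cast_mul]
          gcongr
          exact hqK.trans (by gcongr; linarith)
      _ = K₁ ^ (2 * C + 4 + i) := by ring
      _ ≤ K₁ ^ D := by gcongr; simp only [D]; nlinarith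
  · calc N ^ (i + 2) * ‖(q * (i + 2)) • (f.coeff (i + 2) : UnitAddCircle)‖
        ≤ K₁ * K₁ ^ (3 * C + 2) := by
          rw [mul_nsmul']
          exact happrox.trans (by gcongr)
      _ = K₁ ^ (3 * C + 3) := by ring
      _ ≤ K₁ ^ D := by gcongr; omega

lemma exists_inverseWeyl_top (i : ℕ) : ∃ C, InverseWeyl (i + 1) i C := by
  induction i with
  | zero => exact ⟨1, inverseWeyl_one⟩
  | succ i ih =>
    obtain ⟨C, hC⟩ := ih
    exact ⟨_, hC.succ⟩

end TopCoefficient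

section LowerCoefficients

lemma exists_add_pow_succ_eq {a b N : ℕ} (hab : a + b ≤ N) (j : ℕ) :
    ∃ s ≤ (j + 1) * N ^ j, (a + b) ^ (j + 1) = a ^ (j + 1) + s * b := by
  induction j with
  | zero => exact ⟨1, by simp, by ring⟩
  | succ j ih =>
    obtain ⟨s, hs, hpow⟩ := ih
    refine ⟨s * (a + b) + a ^ (j + 1), ?_, by rw [pow_succ, hpow]; ring⟩
    calc s * (a + b) + a ^ (j + 1) ≤ (j + 1) * N ^ j * N + N ^ (j + 1) := by
          gcongr
          exact le_of_add_le_left hab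
      _ = (j + 1 + 1) * N ^ (j + 1) := by ring

lemma norm_pow_nsmul_sub_le {A : Type*} [SeminormedAddCommGroup A] (α : A) {x₀ q y N : ℕ}
    (hN : x₀ + q * y ≤ N) (j : ℕ) :
    ‖(x₀ + q * y) ^ (j + 1) • α - x₀ ^ (j + 1) • α‖ ≤ (j + 1) * N ^ j * y * ‖q • α‖ := by
  obtain ⟨s, hs, hpow⟩ := exists_add_pow_succ_eq hN j
  have hs' : (s : ℝ) ≤ (j + 1) * N ^ j := by exact_mod_cast hs
  rw [hpow, add_nsmul, add_sub_cancel_left, mul_comm q, ← mul_assoc, mul_nsmul']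
  calc ‖(s * y) • q • α‖ ≤ (s * y : ℕ) * ‖q • α‖ := norm_nsmul_le
    _ ≤ (j + 1) * N ^ j * y * ‖q • α‖ := by rw [Nat.cast_mul]; gcongr

variable {f : ℝ[X]} {i k q N : ℕ} {A : ℝ}

lemma polyPhase_eq_sum_range (hf : f.natDegree ≤ k) (x : ℕ) :
    polyPhase f x = ∑ j ∈ range (k + 1), x ^ j • (f.coeff j : UnitAddCircle) := by
  rw [polyPhase, Polynomial.eval_eq_sum_range' (Nat.lt_succ_of_le hf)]
  have hcoe := map_sum (QuotientAddGroup.mk' (AddSubgroup.zmultiples (1 : ℝ)))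
    (fun j => f.coeff j * (x : ℝ) ^ j) (range (k + 1))
  refine hcoe.trans (sum_congr rfl fun j _ => ?_)
  rw [← AddCircle.coe_nsmul, nsmul_eq_mul, Nat.cast_pow, mul_comm]
  rfl

lemma norm_polyPhase_sub_mul_le (hf : f.natDegree ≤ k)
    (hA : ∀ j ∈ Ioc 0 k, N ^ j * ‖q • (f.coeff j : UnitAddCircle)‖ ≤ A) {x₀ y : ℕ}
    (hN : x₀ + q * y ≤ N) :
    ‖polyPhase f (x₀ + q * y) - polyPhase f x₀‖ * N ≤ k ^ 2 * A * y := by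
  rw [polyPhase_eq_sum_range hf, polyPhase_eq_sum_range hf, sum_range_succ', sum_range_succ',
    pow_zero, pow_zero, add_sub_add_right_eq_sub, ← sum_sub_distrib]
  have hterm : ∀ j ∈ range k, ‖(x₀ + q * y) ^ (j + 1) • (f.coeff (j + 1) : UnitAddCircle) -
      x₀ ^ (j + 1) • (f.coeff (j + 1) : UnitAddCircle)‖ * N ≤ k * A * y := fun j hj => by
    have hjk : (j + 1 : ℝ) ≤ k := by exact_mod_cast mem_range.1 hj
    set α := (f.coeff (j + 1) : UnitAddCircle)
    have hα : N ^ (j + 1) * ‖q • α‖ ≤ A := hA (j + 1) (by simpa using mem_range.1 hj)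
    calc _ ≤ (j + 1) * N ^ j * y * ‖q • α‖ * N := by gcongr; exact norm_pow_nsmul_sub_le α hN j
      _ = (j + 1) * (N ^ (j + 1) * ‖q • α‖) * y := by ring
      _ ≤ k * A * y := by gcongr
  calc _ ≤ ∑ _j ∈ range k, k * A * y := by
        refine (mul_le_mul_of_nonneg_right (norm_sum_le _ _) N.cast_nonneg).trans ?_
        rw [sum_mul]
        exact sum_le_sum hterm
    _ = k ^ 2 * A * y := by simp; ring

lemma exists_polyPhase_approx (hf : f.natDegree ≤ k) (hA₀ : 0 ≤ A)
    (hA : ∀ j ∈ Ioc (i + 1) k, N ^ j * ‖q • (f.coeff j : UnitAddCircle)‖ ≤ A) (x₀ : ℕ) :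
    ∃ g : ℝ[X], g.natDegree ≤ i + 1 ∧ g.coeff (i + 1) = (q ^ (i + 1) : ℕ) * f.coeff (i + 1) ∧
      ∀ y, x₀ + q * y ≤ N →
        ‖polyPhase f (x₀ + q * y) - polyPhase g y‖ * N ≤ k ^ 2 * A * y := by
  set low := PowerSeries.trunc (i + 2) (f : PowerSeries ℝ)
  have hlow_coeff (j : ℕ) : low.coeff j = if j < i + 2 then f.coeff j else 0 := by
    rw [PowerSeries.coeff_trunc, Polynomial.coeff_coe]
  have hlow_deg : low.natDegree ≤ i + 1 :=
    Nat.le_of_lt_succ (PowerSeries.natDegree_trunc_lt _ _)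
  set tail := f - low
  have htail_coeff (j : ℕ) : tail.coeff j = if j < i + 2 then 0 else f.coeff j := by
    rw [Polynomial.coeff_sub, hlow_coeff]
    split_ifs <;> simp
  have htail_deg : tail.natDegree ≤ k := by
    rw [Polynomial.natDegree_le_iff_coeff_eq_zero]
    intro j hj
    rw [htail_coeff, Polynomial.coeff_eq_zero_of_natDegree_lt (hf.trans_lt hj), ite_self]
  refine ⟨(low.taylor (x₀ : ℝ)).comp (Polynomial.C (q : ℝ) * Polynomial.X) +
    Polynomial.C (tail.eval (x₀ : ℝ)), ?_, ?_, fun y hy => ?_⟩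
  · rw [Polynomial.natDegree_add_C]
    refine (natDegree_comp_C_mul_X_le _ _).trans ?_
    rwa [Polynomial.natDegree_taylor]
  · rw [Polynomial.coeff_add, Polynomial.comp_C_mul_X_coeff, coeff_taylor_of_natDegree_le hlow_deg,
      hlow_coeff, if_pos (Nat.lt_succ_self _), Polynomial.coeff_C_succ, add_zero, mul_comm,
      Nat.cast_pow]
  · have hsplit : polyPhase f (x₀ + q * y) - polyPhase ((low.taylor (x₀ : ℝ)).comp
        (Polynomial.C (q : ℝ) * Polynomial.X) + Polynomial.C (tail.eval (x₀ : ℝ))) y =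
          polyPhase tail (x₀ + q * y) - polyPhase tail x₀ := by
      simp only [polyPhase, tail, ← AddCircle.coe_sub, Polynomial.eval_add, Polynomial.eval_sub,
        Polynomial.eval_comp, Polynomial.eval_mul, Polynomial.eval_C, Polynomial.eval_X,
        Polynomial.taylor_eval, Nat.cast_add, Nat.cast_mul, add_comm (q * y : ℝ)]
      ring_nf
    rw [hsplit]
    refine norm_polyPhase_sub_mul_le htail_deg (fun j hj => ?_) hy
    rw [htail_coeff]
    split_ifs with hj_low
    · simpa using hA₀
    · exact hA j (mem_Ioc.2 ⟨not_lt.1 hj_low, (mem_Ioc.1 hj).2⟩)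

lemma exists_lower_degree_le_mul_norm_expSum (hf : f.natDegree ≤ k)
    (hA : ∀ j ∈ Ioc (i + 1) k, N ^ j * ‖q • (f.coeff j : UnitAddCircle)‖ ≤ A) {M L : ℕ} {K : ℝ}
    (hA₀ : 0 ≤ A) (hK : 0 < K) (hMN : M ≤ N) (hN : 0 < N) (hq : 0 < q) (hL : 0 < L)
    (hqL : q * L ≤ N) (hAL : 8 * π * k ^ 2 * A * K * L ≤ N)
    (hlarge : N ≤ K * ‖expSum (polyPhase f) M‖) :
    ∃ g : ℝ[X], g.natDegree ≤ i + 1 ∧ g.coeff (i + 1) = (q ^ (i + 1) : ℕ) * f.coeff (i + 1) ∧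
      ∃ n ≤ L, L ≤ 4 * K * ‖expSum (polyPhase g) n‖ := by
  obtain ⟨x₀, n, hn, hlt, hsum⟩ :=
    exists_progression_le_mul_norm_sum hK.le hMN hN hq hL hqL hlarge
  obtain ⟨g, hg_deg, hg_coeff, happrox⟩ := exists_polyPhase_approx hf hA₀ hA x₀
  refine ⟨g, hg_deg, hg_coeff, n, hn, ?_⟩
  have hclose : ‖expSum (fun y => polyPhase f (x₀ + q * y)) n - expSum (polyPhase g) n‖ ≤
      2 * π * (1 / (8 * π * K)) * n := by
    refine norm_expSum_sub_expSum_le fun y hy => ?_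
    have hy_le : (y : ℝ) ≤ L := by exact_mod_cast (hy.trans_le hn).le
    have hphase := happrox y ((hlt y hy).le.trans hMN)
    have hN' : (0 : ℝ) < N := Nat.cast_pos.2 hN
    rw [le_div_iff₀ (by positivity)]
    refine le_of_mul_le_mul_left ?_ hN'
    calc N * (‖polyPhase f (x₀ + q * y) - polyPhase g y‖ * (8 * π * K))
        = ‖polyPhase f (x₀ + q * y) - polyPhase g y‖ * N * (8 * π * K) := by ring
      _ ≤ k ^ 2 * A * L * (8 * π * K) :=
        mul_le_mul_of_nonneg_right (hphase.trans (by gcongr)) (by positivity)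
      _ ≤ N * 1 := by linarith
  have hn' : (n : ℝ) ≤ L := by exact_mod_cast hn
  have hsum' : ‖expSum (fun y => polyPhase f (x₀ + q * y)) n‖ ≤
      ‖expSum (polyPhase g) n‖ + L / (4 * K) :=
    calc _ ≤ ‖expSum (polyPhase g) n‖ + 2 * π * (1 / (8 * π * K)) * n := by
          linarith [norm_le_norm_add_norm_sub' (expSum (fun y => polyPhase f (x₀ + q * y)) n)
            (expSum (polyPhase g) n)]
      _ = ‖expSum (polyPhase g) n‖ + n / (4 * K) := by field_simp; ring
      _ ≤ _ := by gcongr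
  have hfinal : L ≤ 2 * K * (‖expSum (polyPhase g) n‖ + L / (4 * K)) :=
    hsum.trans (by gcongr; exact hsum')
  have hhalf : 2 * K * (L / (4 * K)) = L / 2 := by field_simp; norm_num
  linarith

lemma eight_mul_pi_mul_sq_le_pow {K : ℝ} (hK : 2 ≤ K) (k : ℕ) :
    8 * π * k ^ 2 ≤ K ^ (5 + 2 * k) :=
  calc 8 * π * k ^ 2 ≤ 2 ^ 5 * (K ^ k) ^ 2 := by
        gcongr
        · linarith [pi_le_four]
        · exact natCast_le_pow hK k
    _ ≤ K ^ 5 * (K ^ k) ^ 2 := by gcongr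
    _ = K ^ (5 + 2 * k) := by ring

lemma InverseWeyl.exists_nsmul_coeff_pred {C C₁ : ℕ} (hC : InverseWeyl k (i + 1) C)
    (hC₁ : InverseWeyl (i + 1) i C₁) {M : ℕ} {K : ℝ} (hf : f.natDegree ≤ k) (hK : 2 ≤ K)
    (hMN : M ≤ N) (hlarge : N ≤ K * ‖expSum (polyPhase f) M‖) (hN : K ^ (6 + 2 * k + C) < N) :
    ∃ q q' : ℕ, 0 < q ∧ q ≤ K ^ C ∧ 0 < q' ∧ q' ≤ K ^ (3 * C₁) ∧
      (∀ j ∈ Ioc (i + 1) k, N ^ j * ‖q • (f.coeff j : UnitAddCircle)‖ ≤ K ^ C) ∧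
      N ^ (i + 1) * ‖q' • q ^ (i + 1) • (f.coeff (i + 1) : UnitAddCircle)‖ ≤
        (K ^ (7 + 2 * k + C)) ^ (i + 1) * K ^ (3 * C₁) := by
  obtain ⟨q, hq, hqK, hA⟩ := hC hf hK hMN hlarge
  have hK₁ : 1 ≤ K := by linarith
  set D := K ^ (6 + 2 * k + C)
  have hD : 0 < D := by positivity
  obtain ⟨L, hL, hLN, hNL⟩ := exists_natCast_mul_le_and_le hD hN.le
  have hqD : q ≤ D := hqK.trans (pow_le_pow_right₀ hK₁ (by omega))
  have hqL : (q : ℝ) * L ≤ N := le_trans (by gcongr) hLN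
  have hAD : 8 * π * k ^ 2 * K ^ C * K ≤ D :=
    calc 8 * π * k ^ 2 * K ^ C * K ≤ K ^ (5 + 2 * k) * K ^ C * K := by
          gcongr
          exact eight_mul_pi_mul_sq_le_pow hK k
      _ = D := by ring
  obtain ⟨g, hg_deg, hg_coeff, n, hn, hg_large⟩ := exists_lower_degree_le_mul_norm_expSum hf hA
    (by positivity) (by positivity) hMN (Nat.cast_pos.1 (hD.trans hN)) hq hL
    (by exact_mod_cast hqL) (le_trans (by gcongr) hLN) hlarge
  obtain ⟨q', hq', hq'K, hg_approx⟩ := hC₁ hg_deg (by linarith : 2 ≤ 4 * K) hn hg_large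
  have hpow : (4 * K) ^ C₁ ≤ K ^ (3 * C₁) := by
    rw [pow_mul]
    gcongr
    nlinarith [mul_le_mul hK hK zero_le_two (by linarith)]
  refine ⟨q, q', hq, hqK, hq', hq'K.trans hpow, hA, ?_⟩
  have happrox := (hg_approx (i + 1) (by simp)).trans hpow
  rw [hg_coeff, ← nsmul_eq_mul, AddCircle.coe_nsmul] at happrox
  have hNL' : N ≤ K ^ (7 + 2 * k + C) * L :=
    calc (N : ℝ) ≤ 2 * D * L := hNL
      _ ≤ K * D * L := by gcongr
      _ = K ^ (7 + 2 * k + C) * L := by ring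
  calc _ ≤ (K ^ (7 + 2 * k + C) * L) ^ (i + 1) * _ := by gcongr
    _ ≤ _ := by
      rw [mul_pow, mul_assoc]
      gcongr

lemma InverseWeyl.pred {C C₁ : ℕ} (hik : i + 1 ≤ k) (hC : InverseWeyl k (i + 1) C)
    (hC₁ : InverseWeyl (i + 1) i C₁) :
    InverseWeyl k i (3 * C₁ + (7 + 2 * k + C) * k) := by
  intro f M N K hf hK hMN hlarge
  have hK₁ : 1 ≤ K := by linarith
  rcases le_or_gt (N : ℝ) (K ^ (6 + 2 * k + C)) with hsmall | hbig
  · refine ⟨1, one_pos, by simpa using one_le_pow₀ hK₁, fun j hj => ?_⟩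
    have hjk := (mem_Ioc.1 hj).2
    exact pow_mul_norm_le_pow N.cast_nonneg hK₁ hsmall (by nlinarith) _
  obtain ⟨q, q', hq, hqK, hq', hq'K, htail, htop⟩ :=
    hC.exists_nsmul_coeff_pred hC₁ hf hK hMN hlarge hbig
  refine ⟨q' * q ^ (i + 1), by positivity, ?_, fun j hj => ?_⟩
  · calc ((q' * q ^ (i + 1) : ℕ) : ℝ) ≤ K ^ (3 * C₁) * (K ^ C) ^ (i + 1) := by
          rw [Nat.cast_mul, Nat.cast_pow]
          gcongr
      _ = K ^ (3 * C₁ + C * (i + 1)) := by rw [← pow_mul, ← pow_add]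
      _ ≤ _ := pow_le_pow_right₀ hK₁ (by nlinarith)
  obtain ⟨hij, hjk⟩ := mem_Ioc.1 hj
  rcases eq_or_lt_of_le (Nat.succ_le_of_lt hij) with rfl | hij
  · rw [mul_nsmul']
    calc _ ≤ (K ^ (7 + 2 * k + C)) ^ (i + 1) * K ^ (3 * C₁) := htop
      _ = K ^ (3 * C₁ + (7 + 2 * k + C) * (i + 1)) := by rw [← pow_mul, ← pow_add, add_comm]
      _ ≤ _ := pow_le_pow_right₀ hK₁ (by nlinarith)
  · rw [pow_succ, ← mul_assoc, mul_nsmul']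
    calc N ^ j * ‖(q' * q ^ i) • q • (f.coeff j : UnitAddCircle)‖
        ≤ N ^ j * ((q' * q ^ i : ℕ) * ‖q • (f.coeff j : UnitAddCircle)‖) := by
          gcongr
          exact norm_nsmul_le
      _ = q' * q ^ i * (N ^ j * ‖q • (f.coeff j : UnitAddCircle)‖) := by push_cast; ring
      _ ≤ K ^ (3 * C₁) * (K ^ C) ^ i * K ^ C := by gcongr; exact htail j (mem_Ioc.2 ⟨hij, hjk⟩)
      _ = K ^ (3 * C₁ + C * (i + 1)) := by rw [← pow_mul, ← pow_add, ← pow_add]; ring_nf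
      _ ≤ _ := pow_le_pow_right₀ hK₁ (by nlinarith)

lemma exists_inverseWeyl {k m : ℕ} (hmk : m ≤ k) : ∃ C, InverseWeyl k m C := by
  induction hmk using Nat.decreasingInduction with
  | of_succ i hik ih =>
    obtain ⟨C, hC⟩ := ih
    obtain ⟨C₁, hC₁⟩ := exists_inverseWeyl_top i
    exact ⟨_, hC.pred hik hC₁⟩
  | self => exact ⟨0, fun _ _ _ _ _ _ _ _ => ⟨1, one_pos, by simp, by simp⟩⟩

end LowerCoefficients

section NonLiouville

lemma exists_one_lt_pow_mul_norm_nsmul {α : ℝ} (hα : ¬ IsLiouvilleNumber α) :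
    ∃ n : ℕ, ∀ q : ℕ, 0 < q → 1 < (2 * q : ℝ) ^ n * ‖q • (α : UnitAddCircle)‖ := by
  simp only [IsLiouvilleNumber, not_forall, not_exists, not_and, not_le] at hα
  obtain ⟨n, hn⟩ := hα
  refine ⟨n, fun q hq => ?_⟩
  rw [← AddCircle.coe_nsmul, nsmul_eq_mul, UnitAddCircle.norm_eq]
  set p := round (q * α)
  have hq₁ : (1 : ℝ) ≤ q := by exact_mod_cast hq
  -- The fraction `p / q` is doubled because a Liouville denominator has to exceed one.
  have hfrac : α - ((2 * p : ℤ) : ℝ) / ((2 * q : ℤ) : ℝ) = (q * α - p) / q := by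
    push_cast
    field_simp
  have happrox : ((2 * q : ℝ) ^ n)⁻¹ < |q * α - p| := by
    have hpq := hn (2 * p) (2 * q) (by omega)
    rw [hfrac, abs_div, Nat.abs_cast, zpow_neg, zpow_natCast] at hpq
    exact_mod_cast hpq.trans_le (div_le_self (abs_nonneg _) hq₁)
  rwa [← inv_lt_iff_one_lt_mul₀' (by positivity)]

variable {α : ℝ} {n : ℕ}

lemma InverseWeyl.lt_of_le_mul_norm_expSum {k C : ℕ}
    (hα : ∀ q : ℕ, 0 < q → 1 < (2 * q : ℝ) ^ n * ‖q • (α : UnitAddCircle)‖)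
    (hk : 0 < k) (hC : InverseWeyl k 0 C) {f : ℝ[X]} {M N m : ℕ} {K : ℝ} (hf : f.natDegree ≤ k)
    (hm : 0 < m) (hcoeff : f.coeff 1 = m * α) (hK : 2 ≤ K) (hMN : M ≤ N) (hN : 0 < N)
    (hlarge : N ≤ K * ‖expSum (polyPhase f) M‖) :
    (N : ℝ) < (2 * m) ^ n * K ^ (C * (n + 1)) := by
  obtain ⟨q, hq, hqK, happrox⟩ := hC hf hK hMN hlarge
  have hlinear := happrox 1 (mem_Ioc.2 ⟨one_pos, hk⟩)
  rw [hcoeff, ← nsmul_eq_mul, AddCircle.coe_nsmul, ← mul_nsmul', pow_one] at hlinear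
  calc (N : ℝ) < N * ((2 * (q * m : ℕ)) ^ n * ‖(q * m) • (α : UnitAddCircle)‖) :=
        lt_mul_of_one_lt_right (by positivity) (hα _ (Nat.mul_pos hq hm))
    _ = (2 * m) ^ n * q ^ n * (N * ‖(q * m) • (α : UnitAddCircle)‖) := by push_cast; ring
    _ ≤ (2 * m) ^ n * (K ^ C) ^ n * K ^ C := by gcongr
    _ = (2 * m) ^ n * K ^ (C * (n + 1)) := by ring

end NonLiouville

section WeylSum

lemma norm_sum_Icc_exp_le (f : ℝ[X]) (M : ℕ) :
    ‖∑ x ∈ Icc 1 M, Complex.exp (2 * π * Complex.I * (f.eval (x : ℝ) : ℝ))‖ ≤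
      ‖expSum (polyPhase f) (M + 1)‖ + 1 := by
  have hterm (x : ℕ) : (toCircle (polyPhase f x) : ℂ) =
      Complex.exp (2 * π * Complex.I * (f.eval (x : ℝ) : ℝ)) := by
    rw [polyPhase, AddCircle.toCircle_apply_mk, Circle.coe_exp]
    push_cast
    ring_nf
  have hsplit : expSum (polyPhase f) (M + 1) = toCircle (polyPhase f 0) +
      ∑ x ∈ Icc 1 M, Complex.exp (2 * π * Complex.I * (f.eval (x : ℝ) : ℝ)) := by
    simp only [← hterm]
    rw [expSum, range_eq_Ico, sum_eq_sum_Ico_succ_bot M.succ_pos]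
    rfl
  rw [eq_sub_of_add_eq' hsplit.symm]
  exact (norm_sub_le _ _).trans_eq (by rw [Circle.norm_coe])

lemma rpow_le_div_four {X τ : ℝ} (hX : 16 ≤ X) (hτ : τ ≤ 1 / 2) : X ^ τ ≤ X / 4 :=
  calc X ^ τ ≤ √X := by rw [sqrt_eq_rpow]; exact rpow_le_rpow_of_exponent_le (by linarith) hτ
    _ ≤ X / 4 := by rw [sqrt_le_left (by linarith)]; nlinarith

lemma one_div_four_mul_add_one_mul_le (n : ℕ) : 1 / (4 * (n + 1) : ℝ) * n ≤ 1 / 4 := by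
  rw [div_mul_eq_mul_div, div_le_div_iff₀ (by positivity) (by positivity)]
  linarith

lemma mul_rpow_pow_mul_rpow_pow_le {X a b ρ τ : ℝ} {n D : ℕ}
    (hX : (a ^ n * b ^ D) ^ 2 ≤ X) (hX₁ : 1 ≤ X) (hexp : ρ * n + τ * D ≤ 1 / 2) :
    (a * X ^ ρ) ^ n * (b * X ^ τ) ^ D ≤ X := by
  have hX₀ : 0 < X := by linarith
  calc (a * X ^ ρ) ^ n * (b * X ^ τ) ^ D = a ^ n * b ^ D * X ^ (ρ * n + τ * D) := by
        rw [rpow_add hX₀, rpow_mul hX₀.le, rpow_mul hX₀.le, rpow_natCast, rpow_natCast]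
        ring
    _ ≤ √X * √X := by
        gcongr
        · exact le_sqrt_of_sq_le hX
        · rw [sqrt_eq_rpow]
          exact rpow_le_rpow_of_exponent_le hX₁ hexp
    _ = X := mul_self_sqrt hX₀.le

lemma natCast_floor_add_one_le_mul_norm_expSum {f : ℝ[X]} {X τ : ℝ} (hX : 16 ≤ X)
    (hτ : τ ≤ 1 / 2)
    (hlarge : X ^ (1 - τ) <
      ‖∑ x ∈ Icc 1 ⌊X⌋₊, Complex.exp (2 * π * Complex.I * (f.eval (x : ℝ) : ℝ))‖) :
    ((⌊X⌋₊ + 1 : ℕ) : ℝ) ≤ 4 * X ^ τ * ‖expSum (polyPhase f) (⌊X⌋₊ + 1)‖ := by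
  have hX₀ : 0 < X := by linarith
  have hsum : X ^ (1 - τ) - 1 ≤ ‖expSum (polyPhase f) (⌊X⌋₊ + 1)‖ := by
    linarith [norm_sum_Icc_exp_le f ⌊X⌋₊]
  calc ((⌊X⌋₊ + 1 : ℕ) : ℝ) ≤ X + 1 := by push_cast; linarith [Nat.floor_le hX₀.le]
    _ ≤ 4 * (X ^ τ * X ^ (1 - τ)) - 4 * X ^ τ := by
        rw [← rpow_add hX₀, add_sub_cancel, rpow_one]
        linarith [rpow_le_div_four hX hτ]
    _ = 4 * X ^ τ * (X ^ (1 - τ) - 1) := by ring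
    _ ≤ _ := by gcongr

lemma exists_eval_eq_mul_eval_mul_div {F : Type*} [Field F] (P : F[X]) (m : F) {d : F}
    (hd : d ≠ 0) :
    ∃ f : F[X], f.natDegree ≤ P.natDegree ∧ f.coeff 1 = m * P.coeff 1 ∧
      ∀ x, f.eval x = m * P.eval (d * x) / d := by
  refine ⟨Polynomial.C (m / d) * P.comp (Polynomial.C d * Polynomial.X),
    (Polynomial.natDegree_C_mul_le _ _).trans (natDegree_comp_C_mul_X_le P d), ?_, fun x => ?_⟩
  · rw [Polynomial.coeff_C_mul, Polynomial.comp_C_mul_X_coeff]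
    field_simp
  · simp only [Polynomial.eval_mul, Polynomial.eval_comp, Polynomial.eval_C, Polynomial.eval_X]
    ring

end WeylSum

theorem statement2_general {α : ℝ} (hα : ¬ IsLiouvilleNumber α) (k : ℕ) :
    ∃ τ > (0 : ℝ), ∃ ρ > (0 : ℝ), ∃ X₀ > (0 : ℝ), ∀ f : ℝ[X], f.natDegree ≤ k →
      ∀ m : ℕ, 0 < m → f.coeff 1 = m * α → ∀ X : ℝ, X ≥ X₀ → (m : ℝ) < X ^ ρ →
        ‖∑ x ∈ Icc 1 ⌊X⌋₊, Complex.exp (2 * π * Complex.I * (f.eval (x : ℝ) : ℝ))‖ ≤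
          X ^ (1 - τ) := by
  obtain ⟨n, hn⟩ := exists_one_lt_pow_mul_norm_nsmul hα
  obtain ⟨C, hC⟩ := exists_inverseWeyl (Nat.zero_le (k + 1))
  set D := C * (n + 1)
  -- These exponents make `(2 * X ^ ρ) ^ n * (4 * X ^ τ) ^ D` of order at most `X ^ (1 / 2)`.
  set τ : ℝ := 1 / (4 * (D + 1))
  set ρ : ℝ := 1 / (4 * (n + 1))
  have hτ : τ ≤ 1 / 2 :=
    one_div_le_one_div_of_le zero_lt_two (by linarith [D.cast_nonneg (α := ℝ)])
  have hexp : ρ * n + τ * D ≤ 1 / 2 := by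
    linarith [one_div_four_mul_add_one_mul_le n, one_div_four_mul_add_one_mul_le D]
  refine ⟨τ, by positivity, ρ, by positivity, max 16 ((2 ^ n * 4 ^ D) ^ 2), by positivity, ?_⟩
  intro f hf m hm hcoeff X hX hmX
  obtain ⟨hX₁₆, hXB⟩ := max_le_iff.1 hX
  have hX₁ : 1 ≤ X := by linarith
  by_contra! hlarge
  refine lt_irrefl X ?_
  calc X ≤ (⌊X⌋₊ + 1 : ℕ) := by exact_mod_cast (Nat.lt_floor_add_one X).le
    _ < (2 * m) ^ n * (4 * X ^ τ) ^ D :=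
        hC.lt_of_le_mul_norm_expSum hn k.succ_pos (hf.trans k.le_succ) hm hcoeff
          (by linarith [one_le_rpow hX₁ (by positivity : 0 ≤ τ)]) le_rfl (Nat.succ_pos _)
          (natCast_floor_add_one_le_mul_norm_expSum hX₁₆ hτ hlarge)
    _ ≤ (2 * X ^ ρ) ^ n * (4 * X ^ τ) ^ D := by gcongr
    _ ≤ X := mul_rpow_pow_mul_rpow_pow_le hXB hX₁ hexp

/-- Weyl sum bound: there are `τ, ρ, X₀ > 0` such that for all positive integers `d, m`
and all `X ≥ X₀` with `m < X^ρ`, `|∑_{x=1}^{⌊X⌋} e(m·P(d·x)/d)| ≤ X^(1-τ)`. -/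
theorem statement2 (P : Polynomial ℝ) (hP : ¬ IsLiouvilleNumber (P.coeff 1)) :
    ∃ τ > (0 : ℝ), ∃ ρ > (0 : ℝ), ∃ X₀ > (0 : ℝ),
      ∀ d : ℕ, 0 < d → ∀ m : ℕ, 0 < m → ∀ X : ℝ, X ≥ X₀ → (m : ℝ) < X ^ ρ →
        ‖∑ x ∈ Finset.Icc 1 ⌊X⌋₊,
            Complex.exp (2 * (π : ℂ) * Complex.I *
              (((m : ℝ) * P.eval ((d * x : ℕ) : ℝ) / (d : ℝ) : ℝ) : ℂ))‖ ≤ X ^ (1 - τ) := by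
  obtain ⟨τ, hτ, ρ, hρ, X₀, hX₀, hbound⟩ := statement2_general hP P.natDegree
  refine ⟨τ, hτ, ρ, hρ, X₀, hX₀, fun d hd m hm X hX hmX => ?_⟩
  obtain ⟨f, hf, hcoeff, heval⟩ :=
    exists_eval_eq_mul_eval_mul_div P (m : ℝ) (Nat.cast_ne_zero.2 hd.ne')
  simpa only [heval, Nat.cast_mul] using hbound f hf m hm hcoeff X hX hmX
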